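/- Let E be a real separable Banach space, T > 0, L ≥ 0 and x ∈ E. Let S : [0,T] → L(E) satisfy S(0) = Id, ‖S(t)‖ ≤ 1 for every t ∈ [0,T], and t ↦ S(t)v continuous on [0,T] for every v ∈ E. Let Φ : [0,T] × E → E be such that t ↦ Φ(t,v) is strongly (Borel) measurable for every v ∈ E, ‖Φ(t,a) − Φ(t,b)‖ ≤ L‖a−b‖ for all t ∈ [0,T] and a, b ∈ E, and ∫₀^T ‖Φ(t,y₀)‖² dt < ∞ for some y₀ ∈ E. Let w : [0,T] → E be continuous. Then there exists exactly one continuous function y : [0,T] → E such that, for every t ∈ [0,T], the map s ↦ S(t−s)(Φ(s,y(s))) is Bochner integrable on [0,t] and y(t) = S(t)x + ∫₀^t S(t−s)(Φ(s,y(s))) ds + w(t). -/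

import Mathlib

/-!
STATEMENT 13: deterministic (pathwise) existence and uniqueness of mild solutions.
`E` is a real separable Banach space, `T > 0`, `L ≥ 0`, `x ∈ E`; `S : [0,T] → L(E)`
satisfies `S 0 = Id`, `‖S t‖ ≤ 1` and is strongly continuous; `Φ : [0,T] × E → E` is
strongly measurable in `t` for each fixed `v`, uniformly `L`-Lipschitz in the second
variable, and `∫₀^T ‖Φ(t,y₀)‖² dt < ∞` for some `y₀`; `w : [0,T] → E` is continuous.
Then there exists exactly one continuous `y : [0,T] → E` such that for every
`t ∈ [0,T]` the map `s ↦ S(t−s)(Φ(s,y(s)))` is Bochner integrable on `[0,t]` and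
`y t = S t x + ∫₀^t S(t−s)(Φ(s,y(s))) ds + w t`.
-/

open MeasureTheory

noncomputable section


open Filter Topology

/-- Joint measurability of a Caratheodory function along a measurable path. -/
theorem aux_carath {E : Type*} [NormedAddCommGroup E] [TopologicalSpace.SeparableSpace E]
    (u : ℝ → E → E) (hm : ∀ v, StronglyMeasurable (fun t => u t v))
    (hc : ∀ t, Continuous (u t)) (F : ℝ → E) (hF : StronglyMeasurable F) :
    StronglyMeasurable (fun s => u s (F s)) := by
  borelize E
  have : SecondCountableTopology E := UniformSpace.secondCountable_of_separable E
  have h := stronglyMeasurable_uncurry_of_continuous_of_stronglyMeasurable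
    (u := fun (v : E) (t : ℝ) => u t v) hc hm
  exact h.comp_measurable (hF.measurable.prodMk measurable_id)

theorem aux_Smeas {E : Type*} [NormedAddCommGroup E] [NormedSpace ℝ E]
    [TopologicalSpace.SeparableSpace E]
    (S : ℝ → E →L[ℝ] E) (hSc : ∀ v : E, Continuous (fun t => S t v))
    (F : ℝ → E) (hF : StronglyMeasurable F) (t : ℝ) :
    StronglyMeasurable (fun s => S (t - s) (F s)) := by
  have : SecondCountableTopology E := UniformSpace.secondCountable_of_separable E
  refine aux_carath (fun s v => S (t - s) v) (fun v => ?_) (fun s => (S (t - s)).continuous) F hF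
  exact ((hSc v).comp (continuous_const.sub continuous_id)).stronglyMeasurable

theorem aux_Sint {E : Type*} [NormedAddCommGroup E] [NormedSpace ℝ E]
    [TopologicalSpace.SeparableSpace E]
    (S : ℝ → E →L[ℝ] E) (hSc : ∀ v : E, Continuous (fun t => S t v))
    (hS1 : ∀ t, ‖S t‖ ≤ 1)
    (F : ℝ → E) (hF : StronglyMeasurable F) (hFi : Integrable F) (t : ℝ) :
    Integrable (fun s => S (t - s) (F s)) := by
  refine hFi.mono (aux_Smeas S hSc F hF t).aestronglyMeasurable (ae_of_all _ fun s => ?_)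
  simpa using (S (t - s)).le_of_opNorm_le (hS1 _) (F s)

theorem aux_Scont {E : Type*} [NormedAddCommGroup E] [NormedSpace ℝ E]
    [TopologicalSpace.SeparableSpace E]
    (S : ℝ → E →L[ℝ] E) (hSc : ∀ v : E, Continuous (fun t => S t v))
    (hS1 : ∀ t, ‖S t‖ ≤ 1)
    (F : ℝ → E) (hF : StronglyMeasurable F) (hFi : Integrable F)
    (hF0 : ∀ s < 0, F s = 0) :
    Continuous (fun t => ∫ s in Set.Icc (0 : ℝ) t, S (t - s) (F s)) := by
  have heq : (fun t => ∫ s in Set.Icc (0 : ℝ) t, S (t - s) (F s))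
      = fun t => ∫ s, (Set.Iic t).indicator (fun s => S (t - s) (F s)) s := by
    funext t
    rw [← integral_indicator measurableSet_Icc]
    congr 1
    funext s
    by_cases h0 : s < 0
    · simp [Set.indicator, hF0 s h0]
    · have : 0 ≤ s := not_lt.mp h0
      simp [Set.indicator, this]
  rw [heq, continuous_iff_continuousAt]
  intro t₀
  refine continuousAt_of_dominated (bound := fun s => ‖F s‖) ?_ ?_ hFi.norm ?_
  · exact Eventually.of_forall fun t =>
      ((aux_Smeas S hSc F hF t).indicator measurableSet_Iic).aestronglyMeasurable
  · refine Eventually.of_forall fun t => ae_of_all _ fun s => ?_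
    refine (norm_indicator_le_norm_self _ _).trans ?_
    simpa using (S (t - s)).le_of_opNorm_le (hS1 _) (F s)
  · have : ∀ᵐ s : ℝ, s ≠ t₀ := by simp [ae_iff]
    filter_upwards [this] with s hs
    rcases lt_or_gt_of_ne hs with h | h
    · have hc : ContinuousAt (fun t => S (t - s) (F s)) t₀ :=
        ((hSc (F s)).comp (continuous_id.sub continuous_const)).continuousAt
      refine hc.congr ?_
      filter_upwards [lt_mem_nhds h] with t ht
      simp [Set.indicator, ht.le]
    · refine (continuousAt_const (y := (0 : E))).congr ?_
      filter_upwards [gt_mem_nhds h] with t ht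
      simp [Set.indicator, ht]

theorem aux_core
    {E : Type*} [NormedAddCommGroup E] [NormedSpace ℝ E] [CompleteSpace E]
    [TopologicalSpace.SeparableSpace E]
    {T L : ℝ} (hT : 0 < T) (hL : 0 ≤ L)
    (S : ℝ → E →L[ℝ] E) (Φ : ℝ → E → E) (b : ℝ → E)
    (hS1 : ∀ t, ‖S t‖ ≤ 1)
    (hSc : ∀ v : E, Continuous (fun t => S t v))
    (hΦmeas : ∀ v : E, StronglyMeasurable (fun t => Φ t v))
    (hΦlip : ∀ t, ∀ a b : E, ‖Φ t a - Φ t b‖ ≤ L * ‖a - b‖)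
    (hΦ0 : ∀ t, t ∉ Set.Icc (0 : ℝ) T → ∀ v, Φ t v = 0)
    (y₀ : E) (hΦint : Integrable (fun t => Φ t y₀))
    (hb : ContinuousOn b (Set.Icc 0 T)) :
    ∃ y : ℝ → E,
      (ContinuousOn y (Set.Icc 0 T) ∧
        ∀ t ∈ Set.Icc (0 : ℝ) T,
          IntegrableOn (fun s => S (t - s) (Φ s (y s))) (Set.Icc 0 t) volume ∧
          y t = b t + (∫ s in Set.Icc (0 : ℝ) t, S (t - s) (Φ s (y s)))) ∧
      ∀ z : ℝ → E,
        (ContinuousOn z (Set.Icc 0 T) ∧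
          ∀ t ∈ Set.Icc (0 : ℝ) T,
            z t = b t + (∫ s in Set.Icc (0 : ℝ) t, S (t - s) (Φ s (z s)))) →
        ∀ t ∈ Set.Icc (0 : ℝ) T, z t = y t := by
  have h0T : (0 : ℝ) ≤ T := hT.le
  let ext : C(Set.Icc (0 : ℝ) T, E) → ℝ → E := fun y => Set.IccExtend h0T y
  have hextc : ∀ y, Continuous (ext y) := fun y => y.continuous.Icc_extend'
  have hextv : ∀ y (t : Set.Icc (0 : ℝ) T), ext y t = y t := fun y t =>
    Set.IccExtend_val h0T y t
  let F : C(Set.Icc (0 : ℝ) T, E) → ℝ → E := fun y s => Φ s (ext y s)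
  have hΦc : ∀ t, Continuous (Φ t) := fun t => by
    refine (LipschitzWith.of_dist_le_mul (K := ⟨L, hL⟩) fun a b => ?_).continuous
    rw [dist_eq_norm, dist_eq_norm]
    exact hΦlip t a b
  have hFm : ∀ y, StronglyMeasurable (F y) := fun y => by
    have : SecondCountableTopology E := UniformSpace.secondCountable_of_separable E
    exact aux_carath Φ hΦmeas hΦc _ (hextc y).stronglyMeasurable
  have hFi : ∀ y, Integrable (F y) := fun y => by
    have h1 : Integrable (fun s => ‖Φ s y₀‖ +
        (Set.Icc (0 : ℝ) T).indicator (fun _ => L * (‖y‖ + ‖y₀‖)) s) := by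
      refine hΦint.norm.add ?_
      rw [integrable_indicator_iff measurableSet_Icc]
      exact integrableOn_const (by simp)
    refine h1.mono' (hFm y).aestronglyMeasurable (ae_of_all _ fun s => ?_)
    by_cases hs : s ∈ Set.Icc (0 : ℝ) T
    · have h2 := hΦlip s (ext y s) y₀
      have h3 : ‖ext y s - y₀‖ ≤ ‖y‖ + ‖y₀‖ :=
        (norm_sub_le _ _).trans (add_le_add (y.norm_coe_le_norm _) le_rfl)
      have h4 := norm_le_insert' (Φ s (ext y s)) (Φ s y₀)
      have h5 := mul_le_mul_of_nonneg_left h3 hL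
      simp only [Set.indicator_of_mem hs]
      change ‖Φ s (ext y s)‖ ≤ _
      linarith
    · simp only [F, hΦ0 s hs, Set.indicator_of_notMem hs, norm_zero, add_zero, le_refl]
  have hF0 : ∀ y, ∀ s < 0, F y s = 0 := fun y s hs =>
    hΦ0 s (fun h => absurd h.1 (not_le.mpr hs)) _
  let K : C(Set.Icc (0 : ℝ) T, E) → C(Set.Icc (0 : ℝ) T, E) := fun y =>
    ⟨fun t => b t + ∫ s in Set.Icc (0 : ℝ) t, S (t - s) (F y s),
      (continuousOn_iff_continuous_domRestrict.mp hb).add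
        ((aux_Scont S hSc hS1 (F y) (hFm y) (hFi y) (hF0 y)).comp continuous_subtype_val)⟩
  have hKit : ∀ (n : ℕ) (y z : C(Set.Icc (0 : ℝ) T, E)) (t : Set.Icc (0 : ℝ) T),
      ‖(K^[n] y) t - (K^[n] z) t‖ ≤ (L * t) ^ n / n.factorial * dist y z := by
    intro n y z
    induction n with
    | zero =>
      intro t
      simp only [Function.iterate_zero, id, pow_zero, Nat.factorial_zero, Nat.cast_one, div_one,
        one_mul]
      rw [← dist_eq_norm]
      exact ContinuousMap.dist_apply_le_dist t
    | succ n ih =>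
      intro t
      rw [Function.iterate_succ_apply', Function.iterate_succ_apply']
      set p := K^[n] y
      set q := K^[n] z
      have e1 : K p t - K q t
          = ∫ s in Set.Icc (0 : ℝ) t, (S (t - s) (F p s) - S (t - s) (F q s)) := by
        rw [integral_sub (aux_Sint S hSc hS1 _ (hFm p) (hFi p) t).integrableOn
          (aux_Sint S hSc hS1 _ (hFm q) (hFi q) t).integrableOn]
        exact add_sub_add_left_eq_sub _ _ _
      have hcont : Continuous (fun s : ℝ => L * ((L * s) ^ n / n.factorial * dist y z)) := by
        fun_prop
      have e2 : ‖K p t - K q t‖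
          ≤ ∫ s in Set.Icc (0 : ℝ) t, L * ((L * s) ^ n / n.factorial * dist y z) := by
        rw [e1]
        refine norm_integral_le_of_norm_le (hcont.integrableOn_Icc) ?_
        refine (ae_restrict_iff' measurableSet_Icc).2 (ae_of_all _ fun s hs => ?_)
        have hsT : s ∈ Set.Icc (0 : ℝ) T := ⟨hs.1, hs.2.trans t.2.2⟩
        rw [← map_sub]
        refine ((S _).le_of_opNorm_le (hS1 _) _).trans ?_
        rw [one_mul]
        refine (hΦlip s _ _).trans (mul_le_mul_of_nonneg_left ?_ hL)
        have h6 := ih ⟨s, hsT⟩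
        rw [← hextv p ⟨s, hsT⟩, ← hextv q ⟨s, hsT⟩] at h6
        exact h6
      refine e2.trans (le_of_eq ?_)
      rw [integral_Icc_eq_integral_Ioc, ← intervalIntegral.integral_of_le t.2.1]
      have e3 : (fun s : ℝ => L * ((L * s) ^ n / n.factorial * dist y z))
          = fun s : ℝ => (L ^ (n + 1) / n.factorial * dist y z) * s ^ n := by
        funext s; rw [mul_pow]; ring
      rw [e3, intervalIntegral.integral_const_mul, integral_pow, Nat.factorial_succ]
      push_cast
      have : (n.factorial : ℝ) ≠ 0 := by positivity
      have : (n : ℝ) + 1 ≠ 0 := by positivity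
      field_simp
      simp
      try ring
  obtain ⟨n, hn⟩ := (FloorSemiring.tendsto_pow_div_factorial_atTop (L * T)
    |>.eventually (gt_mem_nhds zero_lt_one)).exists
  have hc0 : (0 : ℝ) ≤ (L * T) ^ n / n.factorial := by positivity
  have hcontr : ContractingWith ⟨_, hc0⟩ K^[n] := by
    refine ⟨by exact_mod_cast hn, LipschitzWith.of_dist_le_mul fun y z => ?_⟩
    rw [ContinuousMap.dist_le (by positivity)]
    intro t
    rw [dist_eq_norm]
    refine (hKit n y z t).trans ?_
    have ht0 := t.2.1
    have ht1 := t.2.2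
    change _ ≤ (L * T) ^ n / n.factorial * dist y z
    gcongr
  have : Nonempty C(Set.Icc (0 : ℝ) T, E) := ⟨0⟩
  set Y := hcontr.fixedPoint K^[n] with hY
  have hYfix : K Y = Y := hcontr.isFixedPt_fixedPoint_iterate
  refine ⟨ext Y, ⟨(hextc Y).continuousOn, fun t ht => ⟨?_, ?_⟩⟩, ?_⟩
  · exact (aux_Sint S hSc hS1 _ (hFm Y) (hFi Y) t).integrableOn
  · have h7 := hextv Y ⟨t, ht⟩
    rw [← hYfix] at h7
    rw [hYfix] at h7
    rw [h7]
    conv_lhs => rw [← hYfix]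
    rfl
  · rintro z ⟨hzc, hz⟩ t ht
    let Z : C(Set.Icc (0 : ℝ) T, E) := ⟨fun t => z t, continuousOn_iff_continuous_domRestrict.mp hzc⟩
    have hZ : K Z = Z := by
      ext r
      change b r + ∫ s in Set.Icc (0 : ℝ) r, S (r - s) (F Z s) = z r
      rw [hz r r.2]
      congr 1
      refine setIntegral_congr_fun measurableSet_Icc fun s hs => ?_
      have h8 := hextv Z ⟨s, hs.1, hs.2.trans r.2.2⟩
      change ext Z s = z s at h8
      simp only [F, h8]
    have hZY : Z = Y := hcontr.fixedPoint_unique (Function.IsFixedPt.iterate hZ n)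
    have h9 := hextv Y ⟨t, ht⟩
    rw [← hZY] at h9
    rw [← hZY]
    exact h9.symm

theorem stmt_13
    {E : Type*} [NormedAddCommGroup E] [NormedSpace ℝ E] [CompleteSpace E]
    [TopologicalSpace.SeparableSpace E]
    {T L : ℝ} (hT : 0 < T) (hL : 0 ≤ L) (x : E)
    (S : ℝ → E →L[ℝ] E) (Φ : ℝ → E → E) (w : ℝ → E)
    (hS0 : S 0 = ContinuousLinearMap.id ℝ E)
    (hS1 : ∀ t ∈ Set.Icc (0 : ℝ) T, ‖S t‖ ≤ 1)
    (hScont : ∀ v : E, ContinuousOn (fun t => S t v) (Set.Icc 0 T))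
    (hΦmeas : ∀ v : E, StronglyMeasurable (fun t => Φ t v))
    (hΦlip : ∀ t ∈ Set.Icc (0 : ℝ) T, ∀ a b : E, ‖Φ t a - Φ t b‖ ≤ L * ‖a - b‖)
    (hΦint : ∃ y₀ : E,
      ∫⁻ t in Set.Icc (0 : ℝ) T, ENNReal.ofReal (‖Φ t y₀‖ ^ 2) < ⊤)
    (hw : ContinuousOn w (Set.Icc 0 T)) :
    ∃ y : ℝ → E,
      (ContinuousOn y (Set.Icc 0 T) ∧
        ∀ t ∈ Set.Icc (0 : ℝ) T,
          IntegrableOn (fun s => S (t - s) (Φ s (y s))) (Set.Icc 0 t) volume ∧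
          y t = S t x + (∫ s in Set.Icc (0 : ℝ) t, S (t - s) (Φ s (y s))) + w t) ∧
      ∀ z : ℝ → E,
        (ContinuousOn z (Set.Icc 0 T) ∧
          ∀ t ∈ Set.Icc (0 : ℝ) T,
            IntegrableOn (fun s => S (t - s) (Φ s (z s))) (Set.Icc 0 t) volume ∧
            z t = S t x + (∫ s in Set.Icc (0 : ℝ) t, S (t - s) (Φ s (z s))) + w t) →
        ∀ t ∈ Set.Icc (0 : ℝ) T, z t = y t := by
  obtain ⟨y₀, hy₀⟩ := hΦint
  have h0T : (0 : ℝ) ≤ T := hT.le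
  let S' : ℝ → E →L[ℝ] E := fun t => S (Set.projIcc 0 T h0T t)
  let Φ' : ℝ → E → E := fun t v => (Set.Icc (0 : ℝ) T).indicator (fun s => Φ s v) t
  have hS' : ∀ t ∈ Set.Icc (0 : ℝ) T, S' t = S t := fun t ht => by
    simp only [S', Set.projIcc_of_mem h0T ht]
  have hΦ' : ∀ t ∈ Set.Icc (0 : ℝ) T, ∀ v, Φ' t v = Φ t v := fun t ht v => by
    simp only [Φ', Set.indicator_of_mem ht]
  have hint : Integrable (fun t => Φ' t y₀) := by
    change Integrable ((Set.Icc (0 : ℝ) T).indicator (fun s => Φ s y₀))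
    rw [integrable_indicator_iff measurableSet_Icc]
    have hm : MemLp (fun s => Φ s y₀) 2 (volume.restrict (Set.Icc (0 : ℝ) T)) := by
      rw [memLp_two_iff_integrable_sq_norm (hΦmeas y₀).aestronglyMeasurable]
      refine ⟨((hΦmeas y₀).norm.pow 2).aestronglyMeasurable, ?_⟩
      rw [hasFiniteIntegral_iff_ofReal (ae_of_all _ fun s => by positivity)]
      exact hy₀
    exact hm.integrable (by norm_num)
  have key : ∀ (y : ℝ → E) (t : ℝ), t ∈ Set.Icc (0 : ℝ) T →
      Set.EqOn (fun s => S' (t - s) (Φ' s (y s))) (fun s => S (t - s) (Φ s (y s)))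
        (Set.Icc 0 t) := by
    intro y t ht s hs
    simp only
    rw [hΦ' s ⟨hs.1, hs.2.trans ht.2⟩,
      hS' (t - s) ⟨sub_nonneg.2 hs.2, by linarith [hs.1, ht.2]⟩]
  obtain ⟨y, ⟨hyc, hy⟩, hu⟩ := aux_core hT hL S' Φ' (fun t => S t x + w t)
    (fun t => hS1 _ (Set.projIcc 0 T h0T t).2)
    (fun v => (continuousOn_iff_continuous_domRestrict.mp (hScont v)).comp
      (continuous_projIcc (h := h0T)))
    (fun v => (hΦmeas v).indicator measurableSet_Icc)
    (fun t a b => by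
      by_cases ht : t ∈ Set.Icc (0 : ℝ) T
      · rw [hΦ' t ht, hΦ' t ht]; exact hΦlip t ht a b
      · simp only [Φ', Set.indicator_of_notMem ht, sub_self, norm_zero]; positivity)
    (fun t ht v => Set.indicator_of_notMem ht _)
    y₀ hint ((hScont x).add hw)
  refine ⟨y, ⟨hyc, fun t ht => ⟨?_, ?_⟩⟩, ?_⟩
  · exact (hy t ht).1.congr_fun (key y t ht) measurableSet_Icc
  · rw [← setIntegral_congr_fun measurableSet_Icc (key y t ht), add_right_comm]
    exact (hy t ht).2
  · rintro z ⟨hzc, hz⟩ 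
    refine hu z ⟨hzc, fun t ht => ?_⟩
    rw [setIntegral_congr_fun measurableSet_Icc (key z t ht), add_right_comm]
    exact (hz t ht).2
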